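/- Let σ be a saturation function and f the associated vector field on ℝ². The system (T₀) is globally asymptotically stable with respect to the origin: the origin is a Lyapunov-stable equilibrium of (T₀) and every solution (z(t),y(t)) of (T₀) converges to (0,0) as t→+∞. -/

import Mathlib

open Real Filter MeasureTheory intervalIntegral RealInnerProductSpace

noncomputable section

/-- A saturation function: odd, globally Lipschitz, sign-definite, with finite positive limits
of `σ` at `+∞` and of `σ ξ / ξ` at `0`, non-decreasing, differentiable on `(0,∞)` with
non-increasing derivative there. -/
def IsSaturation (σ : ℝ → ℝ) : Prop :=
  (∀ ξ, σ (-ξ) = -σ ξ) ∧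
  (∃ L : NNReal, LipschitzWith L σ) ∧
  (∀ ξ : ℝ, ξ ≠ 0 → σ ξ * ξ > 0) ∧
  (∃ l > 0, Tendsto σ atTop (nhds l)) ∧
  (∃ l > 0, Tendsto (fun ξ => σ ξ / ξ) (nhdsWithin 0 {(0:ℝ)}ᶜ) (nhds l)) ∧
  Monotone σ ∧
  DifferentiableOn ℝ σ (Set.Ioi 0) ∧
  AntitoneOn (deriv σ) (Set.Ioi 0)

/-- The modified saturation function `S` associated with `σ`:
`S ξ = (2/π) ∫_0^{π/2} sin v · σ(ξ sin v) dv`. -/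
def modSat (σ : ℝ → ℝ) (ξ : ℝ) : ℝ :=
  (2 / Real.pi) * ∫ v in (0:ℝ)..(Real.pi / 2), Real.sin v * σ (ξ * Real.sin v)

abbrev E2 := EuclideanSpace ℝ (Fin 2)

open Classical in
/-- The radial vector field `f(z) = S(‖z‖) z / ‖z‖`, `f(0) = 0`. -/
def fvec (σ : ℝ → ℝ) (z : E2) : E2 :=
  if z = 0 then 0 else (modSat σ ‖z‖ / ‖z‖) • z

/-- `(z, y)` solves the limit system `(T₀)`: `ż = y - f(z)`, `ẏ = -f(z)`, for `t ≥ 0`. -/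
def IsSolT0 (σ : ℝ → ℝ) (z y : ℝ → E2) : Prop :=
  ∀ t : ℝ, 0 ≤ t →
    HasDerivAt z (y t - fvec σ (z t)) t ∧ HasDerivAt y (-(fvec σ (z t))) t

/-!
The field `f` is the gradient of a coercive potential `U` whose only critical point is the origin,
and along solutions `V = U(z) + ‖y‖² / 2` satisfies `V̇ = ⟪f(z), y - f(z)⟫ - ⟪y, f(z)⟫ = -‖f(z)‖²`.
Since `V` is coercive with a strict minimum at the origin, its sublevel sets are compact and shrink
to the origin; this gives stability and confines every solution to a compact set, where all the
functions of time involved are uniformly continuous. Barbalat's lemma (a uniformly continuous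
derivative of a convergent function tends to `0`) then applies twice: to `V`, giving `f(z) → 0` and
hence `z → 0`, and to `z`, giving `ż = y - f(z) → 0` and hence `y → 0`.
-/

open scoped Topology

section Convergence

theorem norm_image_add_sub_sub_smul_le {E : Type*} [NormedAddCommGroup E] [NormedSpace ℝ E]
    {F F' : ℝ → E} {t h C : ℝ} (hh : 0 ≤ h)
    (hF : ∀ s ∈ Set.Icc t (t + h), HasDerivAt F (F' s) s)
    (hC : ∀ s ∈ Set.Icc t (t + h), ‖F' s - F' t‖ ≤ C) :
    ‖F (t + h) - F t - h • F' t‖ ≤ C * h := by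
  have hderiv : ∀ s ∈ Set.Icc t (t + h),
      HasDerivWithinAt (fun s => F s - s • F' t) (F' s - F' t) (Set.Icc t (t + h)) s := by
    intro s hs
    have hlin : HasDerivAt (fun s : ℝ => s • F' t) (F' t) s := by
      simpa only [id, one_smul] using (hasDerivAt_id s).smul_const (F' t)
    exact ((hF s hs).fun_sub hlin).hasDerivWithinAt
  have key := (convex_Icc t (t + h)).norm_image_sub_le_of_norm_hasDerivWithin_le hderiv hC
    (Set.left_mem_Icc.2 (by linarith)) (Set.right_mem_Icc.2 (by linarith))
  rw [add_sub_cancel_left, Real.norm_of_nonneg hh] at key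
  convert key using 2
  module

theorem tendsto_zero_of_uniformContinuousOn_deriv {E : Type*} [NormedAddCommGroup E]
    [NormedSpace ℝ E] {F F' : ℝ → E} {a : ℝ} {l : E}
    (hF : ∀ t ∈ Set.Ici a, HasDerivAt F (F' t) t) (hF' : UniformContinuousOn F' (Set.Ici a))
    (hl : Tendsto F atTop (𝓝 l)) : Tendsto F' atTop (𝓝 0) := by
  rw [NormedAddGroup.tendsto_nhds_zero]
  intro ε hε
  obtain ⟨δ, hδ, huc⟩ := Metric.uniformContinuousOn_iff_le.1 hF' (ε / 2) (half_pos hε)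
  have hincr : Tendsto (fun t => F (t + δ) - F t) atTop (𝓝 0) := by
    simpa using (hl.comp (tendsto_atTop_add_const_right atTop δ tendsto_id)).sub hl
  filter_upwards [NormedAddGroup.tendsto_nhds_zero.1 hincr (ε / 2 * δ) (by positivity),
    eventually_ge_atTop a] with t hsmall ht
  have htaylor : ‖F (t + δ) - F t - δ • F' t‖ ≤ ε / 2 * δ := by
    refine norm_image_add_sub_sub_smul_le hδ.le (fun s hs => hF s (ht.trans hs.1)) fun s hs => ?_
    rw [← dist_eq_norm]
    refine huc s (ht.trans hs.1) t ht ?_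
    rw [Real.dist_eq, abs_of_nonneg] <;> linarith [hs.1, hs.2]
  have hnorm : δ * ‖F' t‖ < δ * ε :=
    calc δ * ‖F' t‖ = ‖(F (t + δ) - F t) - (F (t + δ) - F t - δ • F' t)‖ := by
          rw [sub_sub_cancel, norm_smul, Real.norm_of_nonneg hδ.le]
      _ ≤ ‖F (t + δ) - F t‖ + ‖F (t + δ) - F t - δ • F' t‖ := norm_sub_le _ _
      _ < δ * ε := by linarith
  exact lt_of_mul_lt_mul_left hnorm hδ.le

theorem uniformContinuousOn_of_hasDerivAt_of_mapsTo {E : Type*} [NormedAddCommGroup E]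
    [NormedSpace ℝ E] {G : E → E} {X : ℝ → E} {s : Set ℝ} {K : Set E} (hs : Convex ℝ s)
    (hK : IsCompact K) (hG : ContinuousOn G K) (hX : ∀ t ∈ s, HasDerivAt X (G (X t)) t)
    (hXK : Set.MapsTo X s K) : UniformContinuousOn X s := by
  obtain ⟨C, hC⟩ := hK.exists_bound_of_continuousOn hG
  have hlip : LipschitzOnWith C.toNNReal X s :=
    hs.lipschitzOnWith_of_nnnorm_hasDerivWithin_le (fun t ht => (hX t ht).hasDerivWithinAt)
      fun t ht => NNReal.coe_le_coe.1 ((hC _ (hXK ht)).trans (Real.le_coe_toNNReal C))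
  exact hlip.uniformContinuousOn

theorem exists_tendsto_of_antitoneOn_Ici {g : ℝ → ℝ} {a : ℝ} (hg : AntitoneOn g (Set.Ici a))
    (hbdd : BddBelow (g '' Set.Ici a)) : ∃ l, Tendsto g atTop (𝓝 l) := by
  have hanti : Antitone fun t => g (max t a) := fun s t hst =>
    hg (le_max_right s a) (le_max_right t a) (max_le_max_right a hst)
  have hrange : BddBelow (Set.range fun t => g (max t a)) :=
    hbdd.mono (Set.range_subset_iff.2 fun t => Set.mem_image_of_mem g (le_max_right t a))
  refine ⟨_, (tendsto_atTop_ciInf hanti hrange).congr' ?_⟩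
  filter_upwards [eventually_ge_atTop a] with t ht
  rw [max_eq_left ht]

theorem tendsto_of_tendsto_comp_of_isCompact {ι X Y : Type*} [TopologicalSpace X]
    [TopologicalSpace Y] [T2Space Y] {l : Filter ι} {u : ι → X} {f : X → Y} {K : Set X} {x : X}
    {y : Y} (hK : IsCompact K) (huK : ∀ᶠ i in l, u i ∈ K) (hf : Continuous f)
    (hfy : ∀ x' ∈ K, f x' = y → x' = x) (hlim : Tendsto (f ∘ u) l (𝓝 y)) :
    Tendsto u l (𝓝 x) := by
  refine hK.tendsto_nhds_of_unique_mapClusterPt huK fun x' hx' hcluster => hfy x' hx' ?_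
  have hmap : MapClusterPt (f x') l (f ∘ u) := hcluster.continuousAt_comp hf.continuousAt
  exact eq_of_nhds_neBot (ClusterPt.mono hmap hlim)

end Convergence

section Coercive

theorem isCompact_sublevel {X : Type*} [TopologicalSpace X] {V : X → ℝ} (hV : Continuous V)
    (hlim : Tendsto V (cocompact X) atTop) (c : ℝ) : IsCompact {x | V x ≤ c} := by
  obtain ⟨K, hK, hsub⟩ := mem_cocompact'.1 (hlim.eventually_gt_atTop c)
  exact hK.of_isClosed_subset (isClosed_le hV continuous_const) fun x (hx : V x ≤ c) =>
    hsub (by simpa using hx)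

theorem exists_sublevel_subset_of_isOpen {X : Type*} [TopologicalSpace X] {V : X → ℝ}
    {x₀ : X} {s : Set X} (hV : Continuous V) (hlim : Tendsto V (cocompact X) atTop)
    (hmin : ∀ x ≠ x₀, V x₀ < V x) (hs : IsOpen s) (hx₀ : x₀ ∈ s) :
    ∃ c > V x₀, {x | V x < c} ⊆ s := by
  rcases sᶜ.eq_empty_or_nonempty with hempty | ⟨x₁, hx₁⟩
  · exact ⟨V x₀ + 1, by linarith, by simp [Set.compl_empty_iff.1 hempty]⟩
  · obtain ⟨m, hm, hle⟩ := hV.continuousOn.exists_isMinOn' hs.isClosed_compl hx₁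
      ((hlim.eventually_ge_atTop (V x₁)).filter_mono inf_le_left)
    refine ⟨V m, hmin m fun h => hm (h ▸ hx₀), fun x (hx : V x < V m) => ?_⟩
    by_contra hxs
    have hmx : V m ≤ V x := hle hxs
    exact hx.not_ge hmx

theorem tendsto_fst_add_snd_cocompact {X Y : Type*} [TopologicalSpace X] [TopologicalSpace Y]
    {V : X → ℝ} {W : Y → ℝ} {a b : ℝ} (hV : Tendsto V (cocompact X) atTop)
    (hW : Tendsto W (cocompact Y) atTop) (ha : ∀ x, a ≤ V x) (hb : ∀ y, b ≤ W y) :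
    Tendsto (fun p : X × Y => V p.1 + W p.2) (cocompact (X × Y)) atTop := by
  rw [← coprod_cocompact, Filter.coprod]
  have hfst : Tendsto (fun p : X × Y => V p.1) (comap Prod.fst (cocompact X)) atTop :=
    hV.comp tendsto_comap
  have hsnd : Tendsto (fun p : X × Y => W p.2) (comap Prod.snd (cocompact Y)) atTop :=
    hW.comp tendsto_comap
  exact (tendsto_atTop_add_right_of_le _ b hfst fun p => hb p.2).sup
    (tendsto_atTop_add_left_of_le _ a (fun p => ha p.1) hsnd)

end Coercive

section Gradient

variable {E : Type*} [NormedAddCommGroup E] [InnerProductSpace ℝ E] [CompleteSpace E]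
  {U : E → ℝ}

theorem eq_zero_of_hasGradientAt_of_isLocalMin {x g : E} (hx : IsLocalMin U x)
    (hU : HasGradientAt U g x) : g = 0 :=
  (InnerProductSpace.toDual ℝ E).map_eq_zero_iff.1 (hx.hasFDerivAt_eq_zero hU)

theorem continuous_of_hasGradientAt {f : E → E} (hU : ∀ x, HasGradientAt U (f x) x) :
    Continuous U :=
  continuous_iff_continuousAt.2 fun x => (hU x).continuousAt

theorem hasDerivAt_comp_of_hasGradientAt {γ : ℝ → E} {v g : E} {t : ℝ}
    (hU : HasGradientAt U g (γ t)) (hγ : HasDerivAt γ v t) :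
    HasDerivAt (fun s => U (γ s)) (inner ℝ g v) t := by
  simpa only [Function.comp_def, InnerProductSpace.toDual_apply_apply] using
    hU.hasFDerivAt.comp_hasDerivAt t hγ

theorem hasGradientAt_norm {x : E} (hx : x ≠ 0) :
    HasGradientAt (fun w : E => ‖w‖) (‖x‖⁻¹ • x) x := by
  have hsqrt := (hasStrictFDerivAt_norm_sq x).hasFDerivAt.sqrt (by positivity)
  simp only [Real.sqrt_sq (norm_nonneg _)] at hsqrt
  refine hsqrt.congr_fderiv ?_
  ext v
  simp only [one_div, mul_inv_rev, smul_apply, coe_innerSL_apply, nsmul_eq_mul, Nat.cast_ofNat,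
    smul_eq_mul, map_smul, InnerProductSpace.toDual_apply_apply]
  field_simp

theorem hasGradientAt_comp_norm {P : ℝ → ℝ} {p : ℝ} {x : E} (hP : HasDerivAt P p ‖x‖)
    (hp : x = 0 → p = 0) : HasGradientAt (fun w => P ‖w‖) ((p / ‖x‖) • x) x := by
  rw [hasGradientAt_iff_hasFDerivAt]
  rcases eq_or_ne x 0 with rfl | hx
  · have hlittle := (hasDerivAt_iff_isLittleO_nhds_zero.1 (norm_zero (E := E) ▸ hP)).comp_tendsto
      (tendsto_norm_zero (E := E))
    rw [hasFDerivAt_iff_isLittleO_nhds_zero, ← Asymptotics.isLittleO_norm_right]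
    simpa [Function.comp_def, hp rfl] using hlittle
  · refine (hP.comp_hasFDerivAt x (hasGradientAt_norm hx)).congr_fderiv ?_
    rw [div_eq_mul_inv, mul_smul, map_smul _ p]

theorem gradient_eq_zero_and_forall_lt {f : E → E} {x₀ : E} (hU : ∀ x, HasGradientAt U (f x) x)
    (hzero : ∀ x, f x = 0 → x = x₀) (hlim : Tendsto U (cocompact E) atTop) :
    f x₀ = 0 ∧ ∀ x ≠ x₀, U x₀ < U x := by
  have hcont : Continuous U := continuous_of_hasGradientAt hU
  have hcrit : ∀ x, (∀ w, U x ≤ U w) → f x = 0 := fun x hx =>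
    eq_zero_of_hasGradientAt_of_isLocalMin (Eventually.of_forall hx) (hU x)
  obtain ⟨m, hm⟩ := hcont.exists_forall_le hlim
  obtain rfl : m = x₀ := hzero m (hcrit m hm)
  exact ⟨hcrit m hm, fun x hx =>
    (hm x).lt_of_ne fun heq => hx (hzero x (hcrit x (heq ▸ hm)))⟩

end Gradient

section Energy

variable {E : Type*} [NormedAddCommGroup E] {U : E → ℝ}

/-- The Lyapunov function `U(z) + ‖y‖² / 2` of the system with `f = ∇U`. -/
def energy (U : E → ℝ) (p : E × E) : ℝ :=
  U p.1 + ‖p.2‖ ^ 2 / 2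

theorem continuous_energy (hU : Continuous U) : Continuous (energy U) := by
  unfold energy
  fun_prop

theorem energy_lt_energy (hmin : ∀ x ≠ 0, U 0 < U x) : ∀ p ≠ 0, energy U 0 < energy U p := by
  rintro ⟨x, v⟩ hne
  simp only [energy, Prod.fst_zero, Prod.snd_zero, norm_zero]
  rcases eq_or_ne x 0 with rfl | hx
  · have hv : v ≠ 0 := fun h => hne (Prod.ext rfl h)
    have : 0 < ‖v‖ ^ 2 := by positivity
    linarith
  · linarith [hmin x hx, sq_nonneg ‖v‖]

theorem tendsto_energy_cocompact [ProperSpace E] (hU : Continuous U)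
    (hlim : Tendsto U (cocompact E) atTop) : Tendsto (energy U) (cocompact (E × E)) atTop := by
  obtain ⟨m, hm⟩ := hU.exists_forall_le hlim
  have hkinetic : Tendsto (fun v : E => ‖v‖ ^ 2 / 2) (cocompact E) atTop :=
    ((tendsto_pow_atTop two_ne_zero).comp tendsto_norm_cocompact_atTop).atTop_div_const two_pos
  exact tendsto_fst_add_snd_cocompact hlim hkinetic hm fun v => by positivity

end Energy

section DampedSystem

variable {E : Type*} [NormedAddCommGroup E] [NormedSpace ℝ E] {f : E → E} {z y : ℝ → E}

/-- Solutions for `t ≥ 0` of the system `ż = y - f(z)`, `ẏ = -f(z)`. For `f = fvec σ` this is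
`IsSolT0 σ`. -/
def IsDampedSolution (f : E → E) (z y : ℝ → E) : Prop :=
  ∀ t : ℝ, 0 ≤ t → HasDerivAt z (y t - f (z t)) t ∧ HasDerivAt y (-f (z t)) t

namespace IsDampedSolution

theorem hasDerivAt_prodMk (h : IsDampedSolution f z y) {t : ℝ} (ht : 0 ≤ t) :
    HasDerivAt (fun s => (z s, y s)) (y t - f (z t), -f (z t)) t :=
  (h t ht).1.prodMk (h t ht).2

theorem uniformContinuousOn_comp {F : Type*} [UniformSpace F] {K : Set (E × E)} {φ : E × E → F}
    (h : IsDampedSolution f z y) (hf : Continuous f) (hK : IsCompact K)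
    (hzyK : ∀ t, 0 ≤ t → (z t, y t) ∈ K) (hφ : Continuous φ) :
    UniformContinuousOn (fun t => φ (z t, y t)) (Set.Ici 0) := by
  have hfield : Continuous fun p : E × E => (p.2 - f p.1, -f p.1) := by fun_prop
  have htraj : UniformContinuousOn (fun t => (z t, y t)) (Set.Ici 0) :=
    uniformContinuousOn_of_hasDerivAt_of_mapsTo (convex_Ici 0) hK hfield.continuousOn
      (fun t => h.hasDerivAt_prodMk) hzyK
  exact (hK.uniformContinuousOn_of_continuous hφ.continuousOn).comp htraj hzyK

theorem tendsto_snd_of_tendsto_fst {K : Set (E × E)} (h : IsDampedSolution f z y)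
    (hf : Continuous f) (hf₀ : f 0 = 0) (hK : IsCompact K)
    (hzyK : ∀ t, 0 ≤ t → (z t, y t) ∈ K) (hz : Tendsto z atTop (𝓝 0)) :
    Tendsto y atTop (𝓝 0) := by
  have hvel : Tendsto (fun t => y t - f (z t)) atTop (𝓝 0) :=
    tendsto_zero_of_uniformContinuousOn_deriv (fun t ht => (h t ht).1)
      (h.uniformContinuousOn_comp hf hK hzyK (φ := fun p => p.2 - f p.1) (by fun_prop)) hz
  have hfz : Tendsto (fun t => f (z t)) atTop (𝓝 0) := hf₀ ▸ (hf.tendsto 0).comp hz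
  simpa only [sub_add_cancel, add_zero] using hvel.add hfz

end IsDampedSolution

end DampedSystem

section Stability

variable {E : Type*} [NormedAddCommGroup E] [InnerProductSpace ℝ E] {f : E → E} {U : E → ℝ}
  {z y : ℝ → E}

namespace IsDampedSolution

theorem hasDerivAt_energy [CompleteSpace E] (h : IsDampedSolution f z y)
    (hU : ∀ x, HasGradientAt U (f x) x) {t : ℝ} (ht : 0 ≤ t) :
    HasDerivAt (fun s => energy U (z s, y s)) (-‖f (z t)‖ ^ 2) t := by
  obtain ⟨hz, hy⟩ := h t ht
  refine ((hasDerivAt_comp_of_hasGradientAt (hU (z t)) hz).add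
    (hy.norm_sq.div_const 2)).congr_deriv ?_
  rw [inner_sub_right, inner_neg_right, real_inner_self_eq_norm_sq, real_inner_comm]
  ring

theorem antitoneOn_energy [CompleteSpace E] (h : IsDampedSolution f z y)
    (hU : ∀ x, HasGradientAt U (f x) x) :
    AntitoneOn (fun t => energy U (z t, y t)) (Set.Ici 0) :=
  antitoneOn_of_hasDerivWithinAt_nonpos (convex_Ici 0)
    (fun _ ht => (h.hasDerivAt_energy hU ht).continuousAt.continuousWithinAt)
    (fun _ ht => (h.hasDerivAt_energy hU (interior_subset ht)).hasDerivWithinAt)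
    fun _ _ => neg_nonpos.2 (sq_nonneg _)

theorem tendsto_gradient [CompleteSpace E] {K : Set (E × E)} (h : IsDampedSolution f z y)
    (hU : ∀ x, HasGradientAt U (f x) x) (hf : Continuous f) (hK : IsCompact K)
    (hzyK : ∀ t, 0 ≤ t → (z t, y t) ∈ K) : Tendsto (fun t => f (z t)) atTop (𝓝 0) := by
  have hUcont : Continuous U := continuous_of_hasGradientAt hU
  have hbdd : BddBelow ((fun t => energy U (z t, y t)) '' Set.Ici 0) := by
    refine (hK.bddBelow_image (continuous_energy hUcont).continuousOn).mono ?_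
    rintro _ ⟨t, ht, rfl⟩
    exact Set.mem_image_of_mem _ (hzyK t ht)
  obtain ⟨l, hl⟩ := exists_tendsto_of_antitoneOn_Ici (h.antitoneOn_energy hU) hbdd
  have hrate : Tendsto (fun t => -‖f (z t)‖ ^ 2) atTop (𝓝 0) :=
    tendsto_zero_of_uniformContinuousOn_deriv (fun t ht => h.hasDerivAt_energy hU ht)
      (h.uniformContinuousOn_comp hf hK hzyK (φ := fun p => -‖f p.1‖ ^ 2) (by fun_prop)) hl
  rw [tendsto_zero_iff_norm_tendsto_zero]
  simpa using hrate.neg.sqrt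

theorem tendsto_zero [ProperSpace E] (h : IsDampedSolution f z y)
    (hU : ∀ x, HasGradientAt U (f x) x) (hf : Continuous f) (hzero : ∀ x, f x = 0 → x = 0)
    (hlim : Tendsto U (cocompact E) atTop) :
    Tendsto (fun t => (z t, y t)) atTop (𝓝 (0, 0)) := by
  have hUcont : Continuous U := continuous_of_hasGradientAt hU
  obtain ⟨hf₀, -⟩ := gradient_eq_zero_and_forall_lt hU hzero hlim
  have hK : IsCompact {p | energy U p ≤ energy U (z 0, y 0)} :=
    isCompact_sublevel (continuous_energy hUcont) (tendsto_energy_cocompact hUcont hlim) _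
  have hzyK : ∀ t, 0 ≤ t → (z t, y t) ∈ {p | energy U p ≤ energy U (z 0, y 0)} := fun t ht =>
    h.antitoneOn_energy hU Set.self_mem_Ici ht ht
  have hz : Tendsto z atTop (𝓝 0) := by
    refine tendsto_of_tendsto_comp_of_isCompact (hK.image continuous_fst) ?_ hf
      (fun x _ => hzero x) (h.tendsto_gradient hU hf hK hzyK)
    filter_upwards [eventually_ge_atTop 0] with t ht
    exact Set.mem_image_of_mem Prod.fst (hzyK t ht)
  exact hz.prodMk_nhds (h.tendsto_snd_of_tendsto_fst hf hf₀ hK hzyK hz)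

end IsDampedSolution

theorem exists_forall_norm_le_of_norm_zero_le [ProperSpace E]
    (hU : ∀ x, HasGradientAt U (f x) x) (hmin : ∀ x ≠ 0, U 0 < U x)
    (hlim : Tendsto U (cocompact E) atTop) {δ : ℝ} (hδ : 0 < δ) :
    ∃ η > 0, ∀ z y : ℝ → E, IsDampedSolution f z y →
      ‖(z 0, y 0)‖ ≤ η → ∀ t : ℝ, 0 ≤ t → ‖(z t, y t)‖ ≤ δ := by
  have hUcont : Continuous U := continuous_of_hasGradientAt hU
  have hVcont := continuous_energy hUcont
  obtain ⟨c, hc, hsub⟩ := exists_sublevel_subset_of_isOpen hVcont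
    (tendsto_energy_cocompact hUcont hlim) (energy_lt_energy hmin) Metric.isOpen_ball
    (Metric.mem_ball_self hδ)
  obtain ⟨η, hη, hball⟩ := Metric.nhds_basis_closedBall.eventually_iff.1
    (hVcont.continuousAt.eventually_lt_const hc)
  refine ⟨η, hη, fun z y h hinit t ht => ?_⟩
  have hlt : energy U (z t, y t) < c :=
    (h.antitoneOn_energy hU Set.self_mem_Ici ht ht).trans_lt
      (hball (mem_closedBall_zero_iff.2 hinit))
  exact (mem_ball_zero_iff.1 (hsub hlt)).le

theorem stmt10_general [ProperSpace E] (hU : ∀ x, HasGradientAt U (f x) x)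
    (hf : Continuous f) (hzero : ∀ x, f x = 0 → x = 0) (hlim : Tendsto U (cocompact E) atTop) :
    (∀ δ > 0, ∃ η > 0, ∀ z y : ℝ → E, IsDampedSolution f z y →
      ‖(z 0, y 0)‖ ≤ η → ∀ t : ℝ, 0 ≤ t → ‖(z t, y t)‖ ≤ δ) ∧
    (∀ z y : ℝ → E, IsDampedSolution f z y →
      Tendsto (fun t => (z t, y t)) atTop (𝓝 (0, 0))) := by
  obtain ⟨-, hmin⟩ := gradient_eq_zero_and_forall_lt hU hzero hlim
  exact ⟨fun δ hδ => exists_forall_norm_le_of_norm_zero_le hU hmin hlim hδ,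
    fun z y h => h.tendsto_zero hU hf hzero hlim⟩

end Stability

section RadialField

variable {E : Type*} [NormedAddCommGroup E] {S : ℝ → ℝ}

/-- The radial field with profile `S`, of norm `|S ‖x‖|` at `x ≠ 0`. The conventions `r / 0 = 0`
and `r • 0 = 0` both give the value `0` at the origin. -/
def radialField [NormedSpace ℝ E] (S : ℝ → ℝ) (x : E) : E :=
  (S ‖x‖ / ‖x‖) • x

/-- A potential of `radialField S`. -/
def radialPotential (S : ℝ → ℝ) (x : E) : ℝ :=
  ∫ r in (0 : ℝ)..‖x‖, S r

theorem norm_radialField_le [NormedSpace ℝ E] (x : E) : ‖radialField S x‖ ≤ |S ‖x‖| := by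
  rcases eq_or_ne x 0 with rfl | hx
  · simp [radialField]
  · rw [radialField, norm_smul, norm_div, norm_norm, Real.norm_eq_abs,
      div_mul_cancel₀ _ (norm_ne_zero_iff.2 hx)]

theorem continuous_radialField [NormedSpace ℝ E] (hS : Continuous S) (hS₀ : S 0 = 0) :
    Continuous (radialField S : E → E) := by
  refine continuous_iff_continuousAt.2 fun x => ?_
  rcases eq_or_ne x 0 with rfl | hx
  · have hbound : Tendsto (fun x : E => |S ‖x‖|) (𝓝 0) (𝓝 0) := by
      have hcont : Continuous fun x : E => |S ‖x‖| := by fun_prop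
      simpa only [norm_zero, hS₀, abs_zero] using hcont.tendsto 0
    have hvalue : radialField S (0 : E) = 0 := smul_zero _
    rw [ContinuousAt, hvalue]
    exact squeeze_zero_norm norm_radialField_le hbound
  · have hx' : ‖x‖ ≠ 0 := norm_ne_zero_iff.2 hx
    unfold radialField
    fun_prop (disch := assumption)

theorem eq_zero_of_radialField_eq_zero [NormedSpace ℝ E] (hpos : ∀ r > 0, 0 < S r) {x : E}
    (hx : radialField S x = 0) : x = 0 := by
  by_contra hne
  have hnorm : 0 < ‖x‖ := norm_pos_iff.2 hne
  exact smul_ne_zero (div_pos (hpos _ hnorm) hnorm).ne' hne hx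

theorem hasGradientAt_radialPotential [InnerProductSpace ℝ E] [CompleteSpace E]
    (hS : Continuous S) (hS₀ : S 0 = 0) (x : E) :
    HasGradientAt (radialPotential S) (radialField S x) x :=
  hasGradientAt_comp_norm (hS.integral_hasStrictDerivAt 0 ‖x‖).hasDerivAt fun hx => by
    rw [hx, norm_zero, hS₀]

theorem tendsto_integral_atTop_of_monotone {a : ℝ} (hS : Monotone S) (ha : 0 < S a) :
    Tendsto (fun r => ∫ s in (0 : ℝ)..r, S s) atTop atTop := by
  have hint : ∀ b c : ℝ, IntervalIntegrable S volume b c := fun b c => hS.intervalIntegrable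
  have hlin : Tendsto (fun r => (∫ s in (0 : ℝ)..a, S s) + (r - a) * S a) atTop atTop :=
    tendsto_atTop_add_const_left _ _
      ((tendsto_atTop_add_const_right _ (-a) tendsto_id).atTop_mul_const ha)
  refine tendsto_atTop_mono' _ ?_ hlin
  filter_upwards [eventually_ge_atTop a] with r hr
  calc (∫ s in (0 : ℝ)..a, S s) + (r - a) * S a
      = (∫ s in (0 : ℝ)..a, S s) + ∫ _ in a..r, S a := by
        rw [intervalIntegral.integral_const, smul_eq_mul]
    _ ≤ (∫ s in (0 : ℝ)..a, S s) + ∫ s in a..r, S s := by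
        gcongr
        exact integral_mono_on hr intervalIntegrable_const (hint a r) fun s hs => hS hs.1
    _ = ∫ s in (0 : ℝ)..r, S s := integral_add_adjacent_intervals (hint 0 a) (hint a r)

theorem tendsto_radialPotential_cocompact [ProperSpace E] {a : ℝ} (hS : Monotone S)
    (ha : 0 < S a) : Tendsto (radialPotential S : E → ℝ) (cocompact E) atTop :=
  (tendsto_integral_atTop_of_monotone hS ha).comp tendsto_norm_cocompact_atTop

end RadialField

section ModifiedSaturation

variable {σ : ℝ → ℝ}

theorem modSat_zero (hσ₀ : σ 0 = 0) : modSat σ 0 = 0 := by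
  simp [modSat, hσ₀]

theorem continuous_modSat (hσ : Continuous σ) : Continuous (modSat σ) := by
  unfold modSat
  refine continuous_const.mul ?_
  refine continuous_parametric_intervalIntegral_of_continuous'
    (f := fun ξ v => Real.sin v * σ (ξ * Real.sin v)) ?_ 0 (π / 2)
  simp only [Function.uncurry_def]
  fun_prop

theorem intervalIntegrable_modSat_integrand (hσ : Continuous σ) (ξ a b : ℝ) :
    IntervalIntegrable (fun v => Real.sin v * σ (ξ * Real.sin v)) volume a b :=
  Continuous.intervalIntegrable (by fun_prop) a b

theorem monotone_modSat (hσ : Continuous σ) (hmono : Monotone σ) : Monotone (modSat σ) := by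
  intro ξ ζ hξζ
  unfold modSat
  refine mul_le_mul_of_nonneg_left ?_ (by positivity)
  refine integral_mono_on (by positivity) (intervalIntegrable_modSat_integrand hσ ξ _ _)
    (intervalIntegrable_modSat_integrand hσ ζ _ _) fun v hv => ?_
  have hsin : 0 ≤ Real.sin v :=
    Real.sin_nonneg_of_nonneg_of_le_pi hv.1 (by linarith [hv.2, Real.pi_pos])
  exact mul_le_mul_of_nonneg_left (hmono (mul_le_mul_of_nonneg_right hξζ hsin)) hsin

theorem modSat_pos (hσ : Continuous σ) (hpos : ∀ ξ > 0, 0 < σ ξ) {ξ : ℝ} (hξ : 0 < ξ) :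
    0 < modSat σ ξ := by
  refine mul_pos (by positivity) (intervalIntegral_pos_of_pos_on
    (intervalIntegrable_modSat_integrand hσ ξ _ _) (fun v hv => ?_) (by positivity))
  have hsin : 0 < Real.sin v :=
    Real.sin_pos_of_pos_of_lt_pi hv.1 (by linarith [hv.2, Real.pi_pos])
  exact mul_pos hsin (hpos _ (mul_pos hξ hsin))

theorem fvec_eq_radialField (σ : ℝ → ℝ) : fvec σ = radialField (modSat σ) := by
  ext1 z
  rcases eq_or_ne z 0 with rfl | hz
  · rw [fvec, if_pos rfl, radialField, smul_zero]
  · rw [fvec, if_neg hz, radialField]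

end ModifiedSaturation

namespace IsSaturation

variable {σ : ℝ → ℝ}

theorem map_zero (hσ : IsSaturation σ) : σ 0 = 0 := by
  have hodd := hσ.1 0
  rw [neg_zero] at hodd
  linarith

theorem continuous (hσ : IsSaturation σ) : Continuous σ :=
  let ⟨_, hL⟩ := hσ.2.1
  hL.continuous

theorem pos (hσ : IsSaturation σ) {ξ : ℝ} (hξ : 0 < ξ) : 0 < σ ξ :=
  pos_of_mul_pos_left (hσ.2.2.1 ξ hξ.ne') hξ.le

theorem monotone (hσ : IsSaturation σ) : Monotone σ :=
  hσ.2.2.2.2.2.1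

theorem modSat_pos (hσ : IsSaturation σ) {ξ : ℝ} (hξ : 0 < ξ) : 0 < modSat σ ξ :=
  _root_.modSat_pos hσ.continuous (fun _ => hσ.pos) hξ

theorem hasGradientAt_fvec (hσ : IsSaturation σ) (z : E2) :
    HasGradientAt (radialPotential (modSat σ)) (fvec σ z) z :=
  fvec_eq_radialField σ ▸
    hasGradientAt_radialPotential (continuous_modSat hσ.continuous) (modSat_zero hσ.map_zero) z

theorem continuous_fvec (hσ : IsSaturation σ) : Continuous (fvec σ) :=
  fvec_eq_radialField σ ▸
    continuous_radialField (continuous_modSat hσ.continuous) (modSat_zero hσ.map_zero)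

theorem eq_zero_of_fvec_eq_zero (hσ : IsSaturation σ) (z : E2) (hz : fvec σ z = 0) : z = 0 :=
  eq_zero_of_radialField_eq_zero (fun _ => hσ.modSat_pos) (fvec_eq_radialField σ ▸ hz)

theorem tendsto_radialPotential_modSat (hσ : IsSaturation σ) :
    Tendsto (radialPotential (modSat σ) : E2 → ℝ) (cocompact E2) atTop :=
  tendsto_radialPotential_cocompact (monotone_modSat hσ.continuous hσ.monotone)
    (hσ.modSat_pos one_pos)

end IsSaturation

/-- `(T₀)` is globally asymptotically stable with respect to the origin. -/
theorem stmt10 (σ : ℝ → ℝ) (hσ : IsSaturation σ) :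
    (∀ δ > 0, ∃ η > 0, ∀ z y : ℝ → E2, IsSolT0 σ z y →
      ‖(z 0, y 0)‖ ≤ η → ∀ t : ℝ, 0 ≤ t → ‖(z t, y t)‖ ≤ δ) ∧
    (∀ z y : ℝ → E2, IsSolT0 σ z y →
      Tendsto (fun t => (z t, y t)) atTop (nhds (0, 0))) :=
  stmt10_general hσ.hasGradientAt_fvec hσ.continuous_fvec hσ.eq_zero_of_fvec_eq_zero
    hσ.tendsto_radialPotential_modSat
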